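/- Let G be a group and a₁, a₂, a₃, a₄, a₅, b ∈ G elements satisfying: a_i² = b² = 1 for all i; (a_i a_j)² = 1 whenever |i − j| > 1; a_i a_{i+1} a_i = a_{i+1} a_i a_{i+1} for i = 1, …, 4; (a_i b)² = 1 for i ∈ {1, 2, 3, 5}; and a₄ b a₄ = b a₄ b. Then for each i ∈ {2, 3, 4}, a_i (a₁ a₂ a₃ a₄ a₅ b) = (a₁ a₂ a₃ a₄ a₅ b) a_{i−1}. -/

import Mathlib

/-!
Generators whose product squares to `1` commute, and the braid relation `x y x = y x y` says that
`x y` conjugates `x` to `y`. In `w = a₁a₂a₃a₄a₅b`, the factor `aᵢ₋₁aᵢ` therefore conjugates `aᵢ₋₁`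
to `aᵢ`, the factors to its right commute with `aᵢ₋₁`, and those to its left commute with `aᵢ`; so
`w` conjugates `aᵢ₋₁` to `aᵢ`. Here `SemiconjBy w x y` means `w * x = y * w`.
-/

theorem commute_of_sq_eq_one {G : Type*} [Group G] {x y : G}
    (hx : x ^ 2 = 1) (hy : y ^ 2 = 1) (hxy : (x * y) ^ 2 = 1) : Commute x y := by
  have inv_eq_self : ∀ z : G, z ^ 2 = 1 → z⁻¹ = z := fun z hz =>
    inv_eq_of_mul_eq_one_left (by rw [← sq, hz])
  have h := inv_eq_self _ hxy
  rw [mul_inv_rev, inv_eq_self x hx, inv_eq_self y hy] at h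
  exact h.symm

theorem semiconjBy_of_braid {G : Type*} [Group G] {x y : G}
    (h : x * y * x = y * x * y) : SemiconjBy (x * y) x y := by
  rw [SemiconjBy, h, mul_assoc]

/-- relation (a) in the proof of Claim 3.3: for `i ∈ {2, 3, 4}`,
`aᵢ(a₁a₂a₃a₄a₅b) = (a₁a₂a₃a₄a₅b)a_{i−1}`. -/
theorem stmt_13 {G : Type*} [Group G] (a1 a2 a3 a4 a5 b : G)
    (ha1 : a1 ^ 2 = 1) (ha2 : a2 ^ 2 = 1) (ha3 : a3 ^ 2 = 1) (ha4 : a4 ^ 2 = 1)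
    (ha5 : a5 ^ 2 = 1) (hb : b ^ 2 = 1)
    (h13 : (a1 * a3) ^ 2 = 1) (h14 : (a1 * a4) ^ 2 = 1) (h15 : (a1 * a5) ^ 2 = 1)
    (h24 : (a2 * a4) ^ 2 = 1) (h25 : (a2 * a5) ^ 2 = 1) (h35 : (a3 * a5) ^ 2 = 1)
    (hbr1 : a1 * a2 * a1 = a2 * a1 * a2) (hbr2 : a2 * a3 * a2 = a3 * a2 * a3)
    (hbr3 : a3 * a4 * a3 = a4 * a3 * a4) (hbr4 : a4 * a5 * a4 = a5 * a4 * a5)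
    (hb1 : (a1 * b) ^ 2 = 1) (hb2 : (a2 * b) ^ 2 = 1) (hb3 : (a3 * b) ^ 2 = 1)
    (hb5 : (a5 * b) ^ 2 = 1)
    (hb4 : a4 * b * a4 = b * a4 * b) :
    a2 * (a1 * a2 * a3 * a4 * a5 * b) = (a1 * a2 * a3 * a4 * a5 * b) * a1 ∧
    a3 * (a1 * a2 * a3 * a4 * a5 * b) = (a1 * a2 * a3 * a4 * a5 * b) * a2 ∧
    a4 * (a1 * a2 * a3 * a4 * a5 * b) = (a1 * a2 * a3 * a4 * a5 * b) * a3 := by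
  have c13 := commute_of_sq_eq_one ha1 ha3 h13
  have c14 := commute_of_sq_eq_one ha1 ha4 h14
  have c15 := commute_of_sq_eq_one ha1 ha5 h15
  have c24 := commute_of_sq_eq_one ha2 ha4 h24
  have c25 := commute_of_sq_eq_one ha2 ha5 h25
  have c35 := commute_of_sq_eq_one ha3 ha5 h35
  have c1b := commute_of_sq_eq_one ha1 hb hb1
  have c2b := commute_of_sq_eq_one ha2 hb hb2
  have c3b := commute_of_sq_eq_one ha3 hb hb3
  have s12 : SemiconjBy (a1 * a2) a1 a2 := semiconjBy_of_braid hbr1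
  have s23 : SemiconjBy (a1 * a2 * a3) a2 a3 := by
    rw [mul_assoc]
    exact SemiconjBy.mul_left c13 (semiconjBy_of_braid hbr2)
  have s34 : SemiconjBy (a1 * a2 * a3 * a4) a3 a4 := by
    rw [mul_assoc (a1 * a2)]
    exact (SemiconjBy.mul_left c14 c24).mul_left (semiconjBy_of_braid hbr3)
  exact ⟨((((s12.mul_left c13.symm).mul_left c14.symm).mul_left c15.symm).mul_left c1b.symm).symm,
    (((s23.mul_left c24.symm).mul_left c25.symm).mul_left c2b.symm).symm,
    ((s34.mul_left c35.symm).mul_left c3b.symm).symm⟩
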